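/- Let d ≥ 2 and let b : [−1,1] → [0,∞) be a constant kernel, b ≡ β for some β > 0. Then there exists Λ > d such that LS(Λ, b) holds. -/

import Mathlib

open MeasureTheory
open scoped RealInnerProductSpace

noncomputable section

/-- Euclidean space `ℝ^d`. -/
abbrev E (d : ℕ) : Type := EuclideanSpace ℝ (Fin d)

/-- The unit sphere `S^{d-1}` of `ℝ^d`. -/
abbrev Sph (d : ℕ) : Type := Metric.sphere (0 : E d) 1

/-- The surface measure on the unit sphere, realized as a Hausdorff measure. -/
def sphMeasure (d : ℕ) : Measure (Sph d) := μH[(d : ℝ) - 1]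

open Classical in
/-- The 0-homogeneous extension of a function defined on the unit sphere. -/
def homogExt {d : ℕ} (F : Sph d → ℝ) (x : E d) : ℝ :=
  if hx : x = 0 then 0
  else F ⟨‖x‖⁻¹ • x, by
    rw [mem_sphere_zero_iff_norm, norm_smul, norm_inv, norm_norm,
      inv_mul_cancel₀ (norm_ne_zero_iff.mpr hx)]⟩

/-- Smoothness of a function on the sphere, via its 0-homogeneous extension. -/
def SphSmooth {d : ℕ} (F : Sph d → ℝ) : Prop :=
  ContDiffOn ℝ (⊤ : ℕ∞) (homogExt F) {x : E d | x ≠ 0}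

/-- Spherical gradient: the Euclidean gradient of the 0-homogeneous extension. -/
def sphGrad {d : ℕ} (F : Sph d → ℝ) (σ : Sph d) : E d :=
  gradient (homogExt F) (σ : E d)

/-- Euclidean Laplacian of a function on `ℝ^d`. -/
def lapl {d : ℕ} (f : E d → ℝ) (x : E d) : ℝ :=
  ∑ i : Fin d,
    fderiv ℝ (fun y => fderiv ℝ f y (EuclideanSpace.single i 1)) x (EuclideanSpace.single i 1)

/-- Spherical Laplacian: the Euclidean Laplacian of the 0-homogeneous extension. -/
def sphLap {d : ℕ} (F : Sph d → ℝ) (σ : Sph d) : ℝ :=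
  lapl (homogExt F) (σ : E d)

/-- The spherical linear Boltzmann operator `𝓑` with kernel `b`. -/
def sphB {d : ℕ} (b : ℝ → ℝ) (F : Sph d → ℝ) (σ : Sph d) : ℝ :=
  ∫ (σ' : Sph d), (F σ' - F σ) * b ⟪(σ' : E d), (σ : E d)⟫ ∂(sphMeasure d)

/-- The intertwined iterated carré du champ `Γ²_{𝓑,Δ}(g,g)`. -/
def Gamma2BD {d : ℕ} (b : ℝ → ℝ) (g : Sph d → ℝ) (σ : Sph d) : ℝ :=
  (1 / 2) * sphB b (fun τ => ‖sphGrad g τ‖ ^ 2) σ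
    - ⟪sphGrad g σ, sphGrad (fun τ => sphB b g τ) σ⟫

/-- The iterated carré du champ `Γ²_{Δ,Δ}(g,g)` of the spherical Laplacian. -/
def Gamma2DD {d : ℕ} (g : Sph d → ℝ) (σ : Sph d) : ℝ :=
  (1 / 2) * sphLap (fun τ => ‖sphGrad g τ‖ ^ 2) σ
    - ⟪sphGrad g σ, sphGrad (fun τ => sphLap g τ) σ⟫

/-- A collision kernel: non-negative, measurable, satisfying the Lévy condition. -/
def LevyKernel (d : ℕ) (b : ℝ → ℝ) : Prop :=
  Measurable b ∧ (∀ c ∈ Set.Icc (-1 : ℝ) 1, 0 ≤ b c) ∧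
    ∀ e : Sph d,
      Integrable
        (fun σ' : Sph d => (1 - ⟪(e : E d), (σ' : E d)⟫ ^ 2) * b ⟪(e : E d), (σ' : E d)⟫)
        (sphMeasure d)

/-- The log-Sobolev inequality `LS(Λ, b)` on the sphere. -/
def LS (d : ℕ) (b : ℝ → ℝ) (Λ : ℝ) : Prop :=
  ∀ f : Sph d → ℝ, SphSmooth f → (∀ σ, 0 < f σ) → (∀ σ, f (-σ) = f σ) →
    Λ * ∫ (σ : Sph d), (∫ (σ' : Sph d),
          (f σ' - f σ) ^ 2 / (f σ' + f σ) * b ⟪(σ' : E d), (σ : E d)⟫ ∂(sphMeasure d))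
        ∂(sphMeasure d)
      ≤ ∫ (σ : Sph d), Gamma2BD b (fun τ => Real.log (f τ)) σ * f σ ∂(sphMeasure d)

theorem abs_sin_nat_mul_le (n : ℕ) (θ : ℝ) : |Real.sin (n * θ)| ≤ n * |Real.sin θ| := by
  induction n with
  | zero => simp
  | succ k ih =>
    rw [Nat.cast_succ, add_mul, one_mul, Real.sin_add, add_mul, one_mul]
    refine (abs_add_le _ _).trans ?_
    rw [abs_mul, abs_mul]
    have h1 := Real.abs_cos_le_one θ
    have h2 := Real.abs_cos_le_one (k * θ)
    nlinarith [abs_nonneg (Real.sin (k * θ)), abs_nonneg (Real.sin θ)]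

theorem abs_sin_int_mul_le (n : ℤ) (θ : ℝ) : |Real.sin (n * θ)| ≤ |(n : ℝ)| * |Real.sin θ| := by
  obtain ⟨k, rfl | rfl⟩ := n.eq_nat_or_neg
  · simpa using abs_sin_nat_mul_le k θ
  · simpa using abs_sin_nat_mul_le k θ

theorem norm_fourier_sub_one_le (n : ℤ) (θ : ℝ) :
    ‖fourier n (θ : AddCircle (Real.pi - 0)) - 1‖ ≤ 2 * |(n : ℝ)| * |Real.sin θ| := by
  have hpi : (Real.pi : ℂ) ≠ 0 := by exact_mod_cast Real.pi_ne_zero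
  have h : fourier n (θ : AddCircle (Real.pi - 0))
      = Complex.exp (Complex.I * ((2 * (n * θ) : ℝ) : ℂ)) := by
    rw [fourier_coe_apply]
    congr 1
    push_cast
    field_simp
    ring
  rw [h, Complex.norm_exp_I_mul_ofReal_sub_one, mul_div_cancel_left₀ _ two_ne_zero, norm_mul,
    Real.norm_two, Real.norm_eq_abs, mul_assoc]
  exact mul_le_mul_of_nonneg_left (abs_sin_int_mul_le n θ) zero_le_two

theorem fourierCoeffOn_shift_sub {U : ℝ → ℂ} (hU : Continuous U)
    (hper : Function.Periodic U Real.pi) (θ : ℝ) (n : ℤ) :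
    fourierCoeffOn Real.pi_pos (fun s => U (s + θ) - U s) n
      = (fourier n (θ : AddCircle (Real.pi - 0)) - 1) * fourierCoeffOn Real.pi_pos U n := by
  have hcont : Continuous fun s : ℝ => fourier (-n) (s : AddCircle (Real.pi - 0)) :=
    (map_continuous _).comp (AddCircle.continuous_mk' _)
  have hF : Function.Periodic
      (fun s : ℝ => fourier (-n) (s : AddCircle (Real.pi - 0)) * U s) Real.pi := by
    intro s
    have : ((s + Real.pi : ℝ) : AddCircle (Real.pi - 0)) = s := by
      simp
    simp only [this, hper s]
  have hshift : ∫ s in (0 : ℝ)..Real.pi, fourier (-n) (s : AddCircle (Real.pi - 0)) * U (s + θ)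
      = fourier n (θ : AddCircle (Real.pi - 0))
        * ∫ s in (0 : ℝ)..Real.pi, fourier (-n) (s : AddCircle (Real.pi - 0)) * U s := by
    have h1 := intervalIntegral.integral_comp_add_right (a := 0) (b := Real.pi)
      (fun s : ℝ => fourier (-n) (s : AddCircle (Real.pi - 0)) * U s) θ
    have h2 := hF.intervalIntegral_add_eq θ 0
    rw [zero_add, add_comm Real.pi θ, h2, zero_add] at h1
    rw [← h1, ← intervalIntegral.integral_const_mul]
    refine intervalIntegral.integral_congr fun s _ => ?_
    have h3 : fourier n (θ : AddCircle (Real.pi - 0))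
        * fourier (-n) ((s + θ : ℝ) : AddCircle (Real.pi - 0))
        = fourier (-n) (s : AddCircle (Real.pi - 0)) := by
      rw [fourier_coe_apply, fourier_coe_apply, fourier_coe_apply, ← Complex.exp_add]
      congr 1
      push_cast
      ring
    simp only [← h3, mul_assoc]
  rw [fourierCoeffOn_eq_integral, fourierCoeffOn_eq_integral]
  simp only [smul_eq_mul, mul_sub]
  have hi₁ : Continuous fun s : ℝ => fourier (-n) (s : AddCircle (Real.pi - 0)) * U (s + θ) :=
    hcont.mul (by fun_prop)
  have hi₂ : Continuous fun s : ℝ => fourier (-n) (s : AddCircle (Real.pi - 0)) * U s :=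
    hcont.mul hU
  rw [intervalIntegral.integral_sub (hi₁.intervalIntegrable _ _) (hi₂.intervalIntegrable _ _),
    hshift]
  simp only [Complex.real_smul]
  ring

theorem norm_fourierCoeffOn_shift_sub_le {U U' : ℝ → ℂ} (hU : ∀ s, HasDerivAt U (U' s) s)
    (hU' : Continuous U') (hper : Function.Periodic U Real.pi) (θ : ℝ) (n : ℤ) :
    ‖fourierCoeffOn Real.pi_pos (fun s => U (s + θ) - U s) n‖
      ≤ |Real.sin θ| * ‖fourierCoeffOn Real.pi_pos U' n‖ := by
  have hUc : Continuous U := continuous_iff_continuousAt.2 fun s => (hU s).continuousAt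
  rw [fourierCoeffOn_shift_sub hUc hper]
  rcases eq_or_ne n 0 with rfl | hn
  · simp only [fourier_zero, sub_self, zero_mul, norm_zero]
    positivity
  rw [norm_mul]
  have h1 := fourierCoeffOn_of_hasDerivAt Real.pi_pos hn (fun x _ => hU x)
    (hU'.intervalIntegrable 0 Real.pi)
  have h2 : U Real.pi - U 0 = 0 := by
    have := hper 0
    rw [zero_add] at this
    rw [this, sub_self]
  have hn' : (0 : ℝ) < |(n : ℝ)| := by positivity
  have h3 : ‖fourierCoeffOn Real.pi_pos U n‖
      = (2 * |(n : ℝ)|)⁻¹ * ‖fourierCoeffOn Real.pi_pos U' n‖ := by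
    rw [h1, h2]
    simp only [mul_zero, zero_sub, norm_mul, norm_neg, norm_div, Complex.ofReal_zero, sub_zero,
      Complex.norm_real, Complex.norm_I, norm_one, Complex.norm_intCast, Complex.norm_ofNat,
      Real.norm_eq_abs, abs_of_pos Real.pi_pos]
    have := Real.pi_pos
    field_simp
  rw [h3]
  calc _ ≤ 2 * |(n : ℝ)| * |Real.sin θ|
        * ((2 * |(n : ℝ)|)⁻¹ * ‖fourierCoeffOn Real.pi_pos U' n‖) := by
        gcongr
        exact norm_fourier_sub_one_le n θ
    _ = _ := by field_simp

/-- A sharp Wirtinger-type inequality for increments of `π`-periodic functions. -/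
theorem integral_shift_sub_sq_le {u u' : ℝ → ℝ} (hu : ∀ s, HasDerivAt u (u' s) s)
    (hu' : Continuous u') (hper : Function.Periodic u Real.pi) (θ : ℝ) :
    ∫ s in (0 : ℝ)..Real.pi, (u (s + θ) - u s) ^ 2
      ≤ ∫ s in (0 : ℝ)..Real.pi, (Real.sin θ * u' s) ^ 2 := by
  have huc : Continuous u := continuous_iff_continuousAt.2 fun s => (hu s).continuousAt
  have hUc : Continuous fun s => (u s : ℂ) := Complex.continuous_ofReal.comp huc
  have hUc' : Continuous fun s => (u' s : ℂ) := Complex.continuous_ofReal.comp hu'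
  have hperU : Function.Periodic (fun s => (u s : ℂ)) Real.pi := fun s => by simp [hper s]
  have hmem : ∀ {w : ℝ → ℂ}, Continuous w →
      MemLp w 2 (volume.restrict (Set.Ioc 0 Real.pi)) := fun {w} hw =>
    ((memLp_two_iff_integrable_sq_norm hw.aestronglyMeasurable).2
      ((by fun_prop : Continuous fun s => ‖w s‖ ^ 2).integrableOn_Ioc))
  have hl := hasSum_sq_fourierCoeffOn Real.pi_pos
    (hmem (w := fun s => (u (s + θ) : ℂ) - u s) (by fun_prop))
  have hr := (hasSum_sq_fourierCoeffOn Real.pi_pos (hmem hUc')).mul_left (Real.sin θ ^ 2)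
  have key := hasSum_le (fun n => ?_) hl hr
  · simp only [← Complex.ofReal_sub, Complex.norm_real, Real.norm_eq_abs, sq_abs, smul_eq_mul,
      sub_zero] at key
    simp only [mul_pow, intervalIntegral.integral_const_mul]
    have hpi := Real.pi_pos
    rw [← mul_le_mul_iff_right₀ (inv_pos.2 hpi)]
    linarith
  · rw [← sq_abs (Real.sin θ), ← mul_pow]
    exact pow_le_pow_left₀ (norm_nonneg _)
      (norm_fourierCoeffOn_shift_sub_le (fun s => (hu s).ofReal_comp) hUc' hperU θ n) 2
theorem lipschitzWith_normalize_comp {X V : Type*} [PseudoMetricSpace X] [NormedAddCommGroup V]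
    [NormedSpace ℝ V] {f : X → V} {K : NNReal} (hf : LipschitzWith K f) (h1 : ∀ x, 1 ≤ ‖f x‖) :
    LipschitzWith (2 * K) fun x => ‖f x‖⁻¹ • f x := by
  refine LipschitzWith.of_dist_le_mul fun x y => ?_
  have hxy := hf.dist_le_mul x y
  rw [dist_eq_norm] at hxy ⊢
  have hx := h1 x
  have hy := h1 y
  have hx0 : ‖f x‖ ≠ 0 := by positivity
  have hy0 : ‖f y‖ ≠ 0 := by positivity
  have hdec : ‖f x‖⁻¹ • f x - ‖f y‖⁻¹ • f y
      = ‖f x‖⁻¹ • ((f x - f y) + ((‖f y‖ - ‖f x‖) * ‖f y‖⁻¹) • f y) := by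
    rw [smul_add, smul_smul, smul_sub, sub_add, ← sub_smul]
    congr 2
    field_simp
    ring
  have hb : ‖((‖f y‖ - ‖f x‖) * ‖f y‖⁻¹) • f y‖ ≤ ‖f x - f y‖ := by
    rw [norm_smul, norm_mul, norm_inv, norm_norm, mul_assoc, inv_mul_cancel₀ hy0, mul_one,
      norm_sub_rev (f x), Real.norm_eq_abs]
    exact abs_norm_sub_norm_le _ _
  calc _ = ‖f x‖⁻¹ * ‖(f x - f y) + ((‖f y‖ - ‖f x‖) * ‖f y‖⁻¹) • f y‖ := by
        rw [hdec, norm_smul, norm_inv, norm_norm]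
    _ ≤ 1 * (‖f x - f y‖ + ‖f x - f y‖) := by
        gcongr
        · exact inv_le_one_of_one_le₀ hx
        · exact (norm_add_le _ _).trans (by gcongr)
    _ ≤ _ := by push_cast; linarith

theorem lipschitzWith_insertNth {n : ℕ} (i : Fin (n + 1)) (c : ℝ) :
    LipschitzWith 1 fun y : Fin n → ℝ => (i.insertNth c y : Fin (n + 1) → ℝ) := by
  refine LipschitzWith.of_dist_le_mul fun x y => ?_
  rw [NNReal.coe_one, one_mul, dist_pi_le_iff dist_nonneg, i.forall_iff_succAbove]
  simp [dist_le_pi_dist]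

theorem hausdorffMeasure_sphere_lt_top (n : ℕ) :
    μH[(n : ℝ)] (Metric.sphere (0 : E (n + 1)) 1) < ⊤ := by
  set e := (PiLp.continuousLinearEquiv 2 ℝ fun _ : Fin (n + 1) => ℝ).symm
  set φ : Fin (n + 1) → ℝ → (Fin n → ℝ) → E (n + 1) := fun i c y =>
    ‖e (i.insertNth c y)‖⁻¹ • e (i.insertNth c y)
  have hφ : ∀ i c, |c| = 1 → ∃ K, LipschitzWith K (φ i c) := fun i c hc =>
    ⟨_, lipschitzWith_normalize_comp (e.lipschitz.comp (lipschitzWith_insertNth i c)) fun y => by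
      have := PiLp.norm_apply_le (e (i.insertNth c y)) i
      simpa [e, hc] using this⟩
  have hfin : ∀ i c, |c| = 1 → μH[(n : ℝ)] (φ i c '' Set.Icc (-1) 1) < ⊤ := fun i c hc => by
    obtain ⟨K, hK⟩ := hφ i c hc
    refine (hK.hausdorffMeasure_image_le n.cast_nonneg _).trans_lt ?_
    have : (μH[(n : ℝ)] : Measure (Fin n → ℝ)) = volume := by
      simpa using hausdorffMeasure_pi_real (ι := Fin n)
    rw [this]
    exact ENNReal.mul_lt_top (by simp) isCompact_Icc.measure_lt_top
  have hcover : Metric.sphere (0 : E (n + 1)) 1 ⊆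
      ⋃ i, (φ i 1 '' Set.Icc (-1) 1 ∪ φ i (-1) '' Set.Icc (-1) 1) := by
    intro x hx
    rw [mem_sphere_zero_iff_norm] at hx
    obtain ⟨i, hi⟩ := Finite.exists_max fun i => |x i|
    have hxi : 0 < |x i| := by
      refine lt_of_le_of_ne (abs_nonneg _) fun h0 => ?_
      have : x = 0 := by
        ext j
        have := hi j
        rw [← h0] at this
        simpa using this
      rw [this, norm_zero] at hx
      exact zero_ne_one hx
    have hmem : (fun j => x (i.succAbove j) / |x i|) ∈ Set.Icc (-1 : Fin n → ℝ) 1 := by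
      have : ∀ j, |x (i.succAbove j) / abs (x i)| ≤ 1 := fun j => by
        rw [abs_div, abs_abs]
        exact div_le_one_of_le₀ (hi _) (abs_nonneg _)
      exact ⟨fun j => (abs_le.1 (this j)).1, fun j => (abs_le.1 (this j)).2⟩
    have hval : ∀ c, c = x i / |x i| → φ i c (fun j => x (i.succAbove j) / |x i|) = x := by
      intro c hc
      have : e (i.insertNth c fun j => x (i.succAbove j) / |x i|) = |x i|⁻¹ • x := by
        ext j
        refine i.succAboveCases ?_ (fun j => ?_) j
        · simp [e, hc, div_eq_inv_mul]
        · simp [e, div_eq_inv_mul]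
      simp only [φ, this, norm_smul, norm_inv, Real.norm_eq_abs, abs_abs, hx, mul_one, inv_inv,
        smul_smul, mul_inv_cancel₀ hxi.ne', one_smul]
    rw [Set.mem_iUnion]
    refine ⟨i, ?_⟩
    rcases abs_cases (x i) with ⟨h, _⟩ | ⟨h, _⟩
    · exact Or.inl ⟨_, hmem, hval 1 (by rw [h, div_self (h ▸ hxi.ne')])⟩
    · refine Or.inr ⟨_, hmem, hval (-1) ?_⟩
      rw [h, div_neg, div_self (fun h0 => by simp [h0] at hxi)]
  refine (measure_mono hcover).trans_lt ((measure_iUnion_le _).trans_lt ?_)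
  rw [tsum_fintype]
  refine ENNReal.sum_lt_top.2 fun i _ => (measure_union_le _ _).trans_lt ?_
  exact ENNReal.add_lt_top.2 ⟨hfin i 1 (by simp), hfin i (-1) (by simp)⟩

theorem isFiniteMeasure_sphMeasure {d : ℕ} (hd : 1 ≤ d) : IsFiniteMeasure (sphMeasure d) := by
  obtain ⟨n, rfl⟩ : ∃ n, d = n + 1 := ⟨d - 1, by omega⟩
  constructor
  have h := isometry_subtype_coe (s := Metric.sphere (0 : E (n + 1)) 1) |>.hausdorffMeasure_image
    (d := n) (Or.inl n.cast_nonneg) Set.univ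
  have hn : ((n + 1 : ℕ) : ℝ) - 1 = n := by push_cast; ring
  rw [sphMeasure, hn, ← h, Set.image_univ, Subtype.range_coe]
  exact hausdorffMeasure_sphere_lt_top n

/-- The action of a linear isometry on the sphere. -/
def sphIsometry {d : ℕ} (g : E d ≃ₗᵢ[ℝ] E d) : Sph d ≃ᵢ Sph d where
  toFun σ := ⟨g σ, by simp⟩
  invFun σ := ⟨g.symm σ, by simp⟩
  left_inv σ := by simp
  right_inv σ := by simp
  isometry_toFun := fun x y => g.isometry x y

theorem coe_sphIsometry {d : ℕ} (g : E d ≃ₗᵢ[ℝ] E d) (σ : Sph d) :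
    (sphIsometry g σ : E d) = g σ := rfl

theorem integral_sphIsometry {d : ℕ} (g : E d ≃ₗᵢ[ℝ] E d) (F : Sph d → ℝ) :
    ∫ σ, F (sphIsometry g σ) ∂(sphMeasure d) = ∫ σ, F σ ∂(sphMeasure d) :=
  ((sphIsometry g).measurePreserving_hausdorffMeasure _).integral_comp
    (sphIsometry g).toHomeomorph.measurableEmbedding F

theorem Continuous.integrable_sph {d : ℕ} [IsFiniteMeasure (sphMeasure d)] {F : Sph d → ℝ}
    (hF : Continuous F) : Integrable F (sphMeasure d) :=
  hF.integrable_of_hasCompactSupport (HasCompactSupport.of_compactSpace F)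

theorem integral_inner_sq_sph {d : ℕ} (hd : 1 ≤ d) (v : E d) :
    ∫ σ : Sph d, ⟪v, (σ : E d)⟫ ^ 2 ∂(sphMeasure d)
      = ‖v‖ ^ 2 * ((sphMeasure d).real Set.univ / d) := by
  have := isFiniteMeasure_sphMeasure hd
  have hinv : ∀ w : E d, ‖v‖ = ‖w‖ → ∫ σ : Sph d, ⟪v, (σ : E d)⟫ ^ 2 ∂(sphMeasure d)
      = ∫ σ : Sph d, ⟪w, (σ : E d)⟫ ^ 2 ∂(sphMeasure d) := fun w hw => by
    set g := (ℝ ∙ (v - w))ᗮ.reflection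
    have hg : g v = w := Submodule.reflection_sub hw
    rw [← integral_sphIsometry g fun σ => ⟪w, (σ : E d)⟫ ^ 2]
    refine integral_congr_ae (.of_forall fun σ => ?_)
    change ⟪v, (σ : E d)⟫ ^ 2 = ⟪w, g σ⟫ ^ 2
    rw [← hg, g.inner_map_map]
  have hsum : ∑ i : Fin d, ∫ σ : Sph d,
      ⟪(EuclideanSpace.single i ‖v‖ : E d), (σ : E d)⟫ ^ 2 ∂(sphMeasure d)
      = ‖v‖ ^ 2 * (sphMeasure d).real Set.univ := by
    rw [← integral_finsetSum _ fun i _ => Continuous.integrable_sph (by fun_prop)]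
    have : ∀ σ : Sph d, ∑ i : Fin d, ⟪(EuclideanSpace.single i ‖v‖ : E d), (σ : E d)⟫ ^ 2
        = ‖v‖ ^ 2 := fun σ => by
      have hσ : ‖(σ : E d)‖ ^ 2 = 1 := by simp
      rw [EuclideanSpace.norm_sq_eq] at hσ
      simp only [EuclideanSpace.inner_single_left, mul_pow, ← Finset.mul_sum]
      simp only [Real.norm_eq_abs, sq_abs] at hσ
      simp [hσ]
    simp only [this, integral_const, smul_eq_mul, mul_comm]
  rw [Finset.sum_congr rfl fun i _ => (hinv (EuclideanSpace.single i ‖v‖) (by simp)).symm,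
    Finset.sum_const, Finset.card_univ, Fintype.card_fin, nsmul_eq_mul] at hsum
  have : (d : ℝ) ≠ 0 := by positivity
  field_simp
  linarith
theorem sph_coe_ne_zero {d : ℕ} (σ : Sph d) : (σ : E d) ≠ 0 :=
  ne_zero_of_mem_unit_sphere σ

@[simp]
theorem homogExt_coe {d : ℕ} (F : Sph d → ℝ) (σ : Sph d) : homogExt F (σ : E d) = F σ := by
  rw [homogExt, dif_neg (sph_coe_ne_zero σ)]
  congr 1
  ext1
  simp

theorem homogExt_smul {d : ℕ} (F : Sph d → ℝ) {t : ℝ} (ht : 0 < t) {x : E d} (hx : x ≠ 0) :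
    homogExt F (t • x) = homogExt F x := by
  rw [homogExt, homogExt, dif_neg hx, dif_neg (smul_ne_zero ht.ne' hx)]
  congr 2
  rw [norm_smul, Real.norm_of_nonneg ht.le, smul_smul]
  congr 1
  field_simp

theorem homogExt_comp {d : ℕ} (φ : ℝ → ℝ) (F : Sph d → ℝ) {x : E d} (hx : x ≠ 0) :
    homogExt (fun τ => φ (F τ)) x = φ (homogExt F x) := by
  rw [homogExt, homogExt, dif_neg hx, dif_neg hx]

theorem exists_homogExt_eq {d : ℕ} (F : Sph d → ℝ) {x : E d} (hx : x ≠ 0) :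
    ∃ σ, homogExt F x = F σ :=
  ⟨_, by rw [homogExt, dif_neg hx]⟩

namespace SphSmooth

variable {d : ℕ} {F : Sph d → ℝ}

theorem contDiffAt (hF : SphSmooth F) {x : E d} (hx : x ≠ 0) :
    ContDiffAt ℝ (⊤ : ℕ∞) (homogExt F) x :=
  ContDiffOn.contDiffAt hF (isOpen_ne.mem_nhds hx)

theorem hasGradientAt (hF : SphSmooth F) (σ : Sph d) :
    HasGradientAt (homogExt F) (sphGrad F σ) (σ : E d) :=
  ((hF.contDiffAt (sph_coe_ne_zero σ)).differentiableAt (by simp)).hasGradientAt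

theorem continuous (hF : SphSmooth F) : Continuous F := by
  have h : Continuous fun σ : Sph d => homogExt F (σ : E d) :=
    continuous_iff_continuousAt.2 fun σ =>
      ContinuousAt.comp (f := fun σ : Sph d => (σ : E d))
        (hF.contDiffAt (sph_coe_ne_zero σ)).continuousAt continuous_subtype_val.continuousAt
  simpa using h

theorem continuous_sphGrad (hF : SphSmooth F) : Continuous (sphGrad F) := by
  have h : ∀ σ : Sph d, ContinuousAt (fun x : E d => gradient (homogExt F) x) (σ : E d) :=
    fun σ => (InnerProductSpace.toDual ℝ (E d)).symm.continuous.continuousAt.comp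
      ((hF.contDiffAt (sph_coe_ne_zero σ)).fderiv_right (m := 0) (by simp)).continuousAt
  exact continuous_iff_continuousAt.2 fun σ =>
    ContinuousAt.comp (f := fun σ : Sph d => (σ : E d)) (h σ) continuous_subtype_val.continuousAt

theorem comp (hF : SphSmooth F) {φ : ℝ → ℝ} (hφ : ∀ σ, ContDiffAt ℝ (⊤ : ℕ∞) φ (F σ)) :
    SphSmooth fun τ => φ (F τ) := by
  intro x hx
  have h : ContDiffAt ℝ (⊤ : ℕ∞) φ (homogExt F x) := by
    obtain ⟨σ, hσ⟩ := exists_homogExt_eq F hx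
    exact hσ ▸ hφ σ
  refine (h.comp x (hF.contDiffAt hx)).contDiffWithinAt.congr (fun y hy => ?_) ?_
  · exact homogExt_comp φ F hy
  · exact homogExt_comp φ F hx

theorem sphGrad_comp (hF : SphSmooth F) {φ : ℝ → ℝ} {φ' : ℝ} (σ : Sph d)
    (hφ : HasDerivAt φ φ' (F σ)) :
    sphGrad (fun τ => φ (F τ)) σ = φ' • sphGrad F σ := by
  rw [← homogExt_coe F σ] at hφ
  have h := hφ.comp_hasFDerivAt (σ : E d) (hF.hasGradientAt σ).hasFDerivAt
  have h2 : HasGradientAt (homogExt fun τ => φ (F τ)) (φ' • sphGrad F σ) (σ : E d) := by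
    rw [hasGradientAt_iff_hasFDerivAt, map_smul]
    refine h.congr_of_eventuallyEq ?_
    filter_upwards [isOpen_ne.mem_nhds (sph_coe_ne_zero σ)] with x hx
    exact homogExt_comp φ F hx
  exact h2.gradient

theorem inner_sphGrad_self (hF : SphSmooth F) (σ : Sph d) :
    ⟪sphGrad F σ, (σ : E d)⟫ = 0 := by
  have h1 : HasDerivAt (fun t : ℝ => t • (σ : E d)) ((1 : ℝ) • (σ : E d)) 1 :=
    (hasDerivAt_id (1 : ℝ)).smul_const (σ : E d)
  have h2 := (hF.hasGradientAt σ).hasFDerivAt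
  rw [← one_smul ℝ (σ : E d)] at h2
  have h3 := h2.comp_hasDerivAt (1 : ℝ) h1
  have h4 : HasDerivAt (homogExt F ∘ fun t : ℝ => t • (σ : E d)) 0 1 := by
    refine (hasDerivAt_const (1 : ℝ) (homogExt F (σ : E d))).congr_of_eventuallyEq ?_
    filter_upwards [Ioi_mem_nhds (zero_lt_one' ℝ)] with t ht
    exact homogExt_smul F ht (sph_coe_ne_zero σ)
  simpa using h3.unique h4

end SphSmooth

theorem norm_cos_smul_add_sin_smul {V : Type*} [NormedAddCommGroup V] [InnerProductSpace ℝ V]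
    {v w : V} (hv : ‖v‖ = 1) (hw : ‖w‖ = 1) (hvw : ⟪v, w⟫ = 0) (s : ℝ) :
    ‖Real.cos s • v + Real.sin s • w‖ = 1 := by
  have : ‖Real.cos s • v + Real.sin s • w‖ ^ 2 = 1 := by
    rw [norm_add_sq_real, norm_smul, norm_smul, hv, hw, inner_smul_left, inner_smul_right, hvw]
    simp
  exact (pow_eq_one_iff_of_nonneg (norm_nonneg _) two_ne_zero).1 this

/-- The great circle through two orthogonal points of the sphere. -/
def greatCircle {d : ℕ} (v w : Sph d) (hvw : ⟪(v : E d), (w : E d)⟫ = 0) (s : ℝ) : Sph d :=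
  ⟨Real.cos s • (v : E d) + Real.sin s • (w : E d), by
    rw [mem_sphere_zero_iff_norm]
    exact norm_cos_smul_add_sin_smul (by simp) (by simp) hvw s⟩

section greatCircle

variable {d : ℕ} {v w : Sph d} (hvw : ⟪(v : E d), (w : E d)⟫ = 0)

theorem continuous_greatCircle : Continuous (greatCircle v w hvw) :=
  Continuous.subtype_mk (by fun_prop) _

theorem greatCircle_add_pi (s : ℝ) :
    greatCircle v w hvw (s + Real.pi) = -greatCircle v w hvw s := by
  ext1
  rw [coe_neg_sphere]
  simp only [greatCircle, Real.cos_add_pi, Real.sin_add_pi, neg_smul, neg_add]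

theorem inner_sphIsometry (g : E d ≃ₗᵢ[ℝ] E d) (σ τ : Sph d) :
    ⟪(sphIsometry g σ : E d), (sphIsometry g τ : E d)⟫ = ⟪(σ : E d), (τ : E d)⟫ :=
  g.inner_map_map _ _

theorem sphIsometry_greatCircle (g : E d ≃ₗᵢ[ℝ] E d) (s : ℝ) :
    sphIsometry g (greatCircle v w hvw s)
      = greatCircle (sphIsometry g v) (sphIsometry g w)
        ((inner_sphIsometry g v w).trans hvw) s := by
  ext1
  simp [coe_sphIsometry, greatCircle]

theorem exists_sphIsometry_greatCircle (s : ℝ) :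
    ∃ g : E d ≃ₗᵢ[ℝ] E d, ∀ t,
      sphIsometry g (greatCircle v w hvw t) = greatCircle v w hvw (s + t) := by
  have hv : ⟪(v : E d), (v : E d)⟫ = 1 := by simp
  have hw : ⟪(w : E d), (w : E d)⟫ = 1 := by simp
  have hwv : ⟪(w : E d), (v : E d)⟫ = 0 := by rw [real_inner_comm, hvw]
  set n := greatCircle v w hvw (s / 2)
  set g := (ℝ ∙ (v : E d)).reflection.trans (ℝ ∙ (n : E d)).reflection
  have hn : ∀ x : E d, (ℝ ∙ (n : E d)).reflection x
      = 2 • ⟪(n : E d), x⟫ • (n : E d) - x := fun x => by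
    simp [Submodule.reflection_singleton_apply]
  have hn' : (n : E d) = Real.cos (s / 2) • (v : E d) + Real.sin (s / 2) • (w : E d) := rfl
  have hcos : Real.cos s = 2 * Real.cos (s / 2) ^ 2 - 1 := by rw [← Real.cos_two_mul]; ring_nf
  have hcos' : Real.cos s = 1 - 2 * Real.sin (s / 2) ^ 2 := by
    rw [hcos, Real.cos_sq']; ring
  have hsin : Real.sin s = 2 * Real.sin (s / 2) * Real.cos (s / 2) := by
    rw [← Real.sin_two_mul]; ring_nf
  have hgv : g v = Real.cos s • (v : E d) + Real.sin s • (w : E d) := by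
    have h0 : (ℝ ∙ (v : E d)).reflection (v : E d) = v := by
      simp [Submodule.reflection_singleton_apply, two_smul]
    rw [LinearIsometryEquiv.trans_apply, h0, hn, hn', inner_add_left, inner_smul_left,
      inner_smul_left, hv, hwv, hcos, hsin]
    simp only [conj_trivial]
    module
  have hgw : g w = (-Real.sin s) • (v : E d) + Real.cos s • (w : E d) := by
    have h0 : (ℝ ∙ (v : E d)).reflection (w : E d) = -w := by
      simp [Submodule.reflection_singleton_apply, hvw]
    rw [LinearIsometryEquiv.trans_apply, h0, hn, hn', inner_add_left, inner_smul_left,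
      inner_smul_left, inner_neg_right, inner_neg_right, hvw, hw, hcos', hsin]
    simp only [conj_trivial]
    module
  refine ⟨g, fun t => ?_⟩
  ext1
  rw [coe_sphIsometry]
  simp only [greatCircle, map_add, map_smul, hgv, hgw, Real.cos_add, Real.sin_add]
  module

theorem SphSmooth.integral_greatCircle_le {h : Sph d → ℝ} (hh : SphSmooth h)
    (heven : ∀ σ, h (-σ) = h σ) (θ : ℝ) :
    ∫ s in (0 : ℝ)..Real.pi, (h (greatCircle v w hvw s) - h (greatCircle v w hvw (s + θ))) ^ 2
      ≤ ∫ s in (0 : ℝ)..Real.pi, ⟪sphGrad h (greatCircle v w hvw s),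
          (greatCircle v w hvw (s + θ) : E d)⟫ ^ 2 := by
  have hc : ∀ s : ℝ, HasDerivAt (fun s => (greatCircle v w hvw s : E d))
      ((-Real.sin s) • (v : E d) + Real.cos s • (w : E d)) s := fun s =>
    ((Real.hasDerivAt_cos s).smul_const _).add ((Real.hasDerivAt_sin s).smul_const _)
  have hu : ∀ s : ℝ, HasDerivAt (fun s => h (greatCircle v w hvw s))
      ⟪sphGrad h (greatCircle v w hvw s), (-Real.sin s) • (v : E d) + Real.cos s • (w : E d)⟫ s :=
    fun s => by
      simpa [Function.comp_def] using
        (hh.hasGradientAt (greatCircle v w hvw s)).hasFDerivAt.comp_hasDerivAt s (hc s)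
  have hcont : Continuous fun s => ⟪sphGrad h (greatCircle v w hvw s),
      (-Real.sin s) • (v : E d) + Real.cos s • (w : E d)⟫ :=
    (hh.continuous_sphGrad.comp (continuous_greatCircle hvw)).inner (by fun_prop)
  have key := integral_shift_sub_sq_le hu hcont
    (fun s => by simp only [greatCircle_add_pi, heven]) θ
  calc _ = _ := intervalIntegral.integral_congr fun s _ => sub_sq_comm _ _
    _ ≤ _ := key
    _ = _ := intervalIntegral.integral_congr fun s _ => by
      have h1 : (greatCircle v w hvw (s + θ) : E d)
          = Real.cos θ • (greatCircle v w hvw s : E d)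
            + Real.sin θ • ((-Real.sin s) • (v : E d) + Real.cos s • (w : E d)) := by
        simp only [greatCircle, Real.cos_add, Real.sin_add]
        module
      simp only [h1, inner_add_right (sphGrad h _) (Real.cos θ • _),
        inner_smul_right _ _ (Real.cos θ),
        inner_smul_right _ _ (Real.sin θ), hh.inner_sphGrad_self, mul_zero, zero_add]

end greatCircle

theorem exists_greatCircle {d : ℕ} {σ σ' : Sph d} (h1 : σ' ≠ σ) (h2 : σ' ≠ -σ) :
    ∃ (w : Sph d) (hw : ⟪(σ : E d), (w : E d)⟫ = 0) (θ : ℝ), σ' = greatCircle σ w hw θ := by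
  set a := ⟪(σ : E d), (σ' : E d)⟫
  set y : E d := (σ' : E d) - a • (σ : E d)
  have hσ : ⟪(σ : E d), (σ : E d)⟫ = 1 := by simp
  have horth : ⟪(σ : E d), y⟫ = 0 := by
    simp only [y, inner_sub_right, inner_smul_right, hσ, mul_one]
    exact sub_self _
  have hy2 : a ^ 2 + ‖y‖ ^ 2 = 1 := by
    have hdec : (σ' : E d) = a • (σ : E d) + y := by simp [y]
    have : ‖(σ' : E d)‖ ^ 2 = 1 := by simp
    rw [hdec, norm_add_sq_real, inner_smul_left, horth, norm_smul] at this
    simpa using this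
  have hy : y ≠ 0 := fun h0 => by
    rw [h0, norm_zero] at hy2
    have hσ' : (σ' : E d) = a • (σ : E d) := sub_eq_zero.1 h0
    rcases sq_eq_one_iff.1 (by simpa using hy2 : a ^ 2 = 1) with h | h
    · exact h1 (by ext1; simpa [h] using hσ')
    · exact h2 (by ext1; simpa [h] using hσ')
  have hy' : ‖y‖ ≠ 0 := norm_ne_zero_iff.2 hy
  refine ⟨⟨‖y‖⁻¹ • y, by simp [norm_smul, hy']⟩, by simp [inner_smul_right, horth],
    Complex.arg (a + ‖y‖ * Complex.I), ?_⟩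
  have hn : ‖(a + ‖y‖ * Complex.I : ℂ)‖ = 1 := by
    rw [Complex.norm_add_mul_I, hy2, Real.sqrt_one]
  have hne : (a + ‖y‖ * Complex.I : ℂ) ≠ 0 := norm_ne_zero_iff.1 (by simp [hn])
  ext1
  simp only [greatCircle, Complex.cos_arg hne, Complex.sin_arg, hn]
  simp [smul_smul, hy', y]
/-- The orthogonal group of `ℝ^d`. -/
abbrev OrthGroup (d : ℕ) : Type := unitary (E d →L[ℝ] E d)

instance (d : ℕ) : ContinuousStar (E d →L[ℝ] E d) :=
  ⟨(ContinuousLinearMap.adjoint (𝕜 := ℝ) (E := E d) (F := E d)).continuous⟩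

instance (d : ℕ) : MeasurableSpace (OrthGroup d) := borel _

instance (d : ℕ) : BorelSpace (OrthGroup d) := ⟨rfl⟩

instance (d : ℕ) : CompactSpace (OrthGroup d) := by
  have : ProperSpace (E d →L[ℝ] E d) := FiniteDimensional.proper ℝ _
  refine isCompact_iff_compactSpace.1 (Metric.isCompact_of_isClosed_isBounded ?_ ?_)
  · have h : ((unitary (E d →L[ℝ] E d) : Set (E d →L[ℝ] E d)))
        = {u | star u * u = 1} ∩ {u | u * star u = 1} := by
      ext u
      exact Unitary.mem_iff
    rw [h]
    exact (isClosed_eq (continuous_star.mul continuous_id) continuous_const).inter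
      (isClosed_eq (continuous_id.mul continuous_star) continuous_const)
  · refine (Metric.isBounded_closedBall (x := 0) (r := 1)).subset fun u hu => ?_
    rw [mem_closedBall_zero_iff]
    exact ContinuousLinearMap.opNorm_le_bound _ zero_le_one fun x => by
      rw [one_mul]
      exact ((Unitary.linearIsometryEquiv ⟨u, hu⟩).norm_map x).le

/-- The right action of the orthogonal group on the sphere, by inverses. -/
def rot {d : ℕ} (g : OrthGroup d) : Sph d → Sph d :=
  sphIsometry (Unitary.linearIsometryEquiv g⁻¹)

theorem Continuous.orthRot {d : ℕ} {X : Type*} [TopologicalSpace X] {a : X → OrthGroup d}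
    {b : X → Sph d} (ha : Continuous a) (hb : Continuous b) :
    Continuous fun x => rot (a x) (b x) := by
  refine Continuous.subtype_mk (f := fun x =>
    (((a x)⁻¹ : OrthGroup d) : E d →L[ℝ] E d) (b x : E d)) ?_ _
  have h : Continuous fun x => (((a x)⁻¹ : OrthGroup d) : E d →L[ℝ] E d) :=
    continuous_subtype_val.comp ha.inv
  exact h.clm_apply (continuous_subtype_val.comp hb)

theorem rot_symm_mul {d : ℕ} (a : E d ≃ₗᵢ[ℝ] E d) (g : OrthGroup d) (σ : Sph d) :
    rot ((Unitary.linearIsometryEquiv.symm a)⁻¹ * g) σ = rot g (sphIsometry a σ) := by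
  ext1
  simp [rot, coe_sphIsometry]

theorem rot_neg {d : ℕ} (g : OrthGroup d) (σ : Sph d) : rot g (-σ) = -rot g σ := by
  ext1
  simp [rot, coe_sphIsometry]

section average

variable {d : ℕ} (ν : Measure (OrthGroup d)) [ν.IsHaarMeasure] {K : Sph d × Sph d → ℝ}

theorem integral_rot_sphIsometry (K : Sph d × Sph d → ℝ) (a : E d ≃ₗᵢ[ℝ] E d) (σ τ : Sph d) :
    ∫ g, K (rot g (sphIsometry a σ), rot g (sphIsometry a τ)) ∂ν
      = ∫ g, K (rot g σ, rot g τ) ∂ν := by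
  simp only [← rot_symm_mul]
  exact integral_mul_left_eq_self (fun g => K (rot g σ, rot g τ)) _

theorem integral_rot_greatCircle (hK : Continuous K) {v w : Sph d}
    (hvw : ⟪(v : E d), (w : E d)⟫ = 0) (θ : ℝ) :
    Real.pi * ∫ g, K (rot g v, rot g (greatCircle v w hvw θ)) ∂ν
      = ∫ g, (∫ s in (0 : ℝ)..Real.pi, K (rot g (greatCircle v w hvw s),
          rot g (greatCircle v w hvw (s + θ)))) ∂ν := by
  have h0 : greatCircle v w hvw 0 = v := by ext1; simp [greatCircle]
  have hs : ∀ s, ∫ g, K (rot g v, rot g (greatCircle v w hvw θ)) ∂ν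
      = ∫ g, K (rot g (greatCircle v w hvw s), rot g (greatCircle v w hvw (s + θ))) ∂ν := by
    intro s
    obtain ⟨a, ha⟩ := exists_sphIsometry_greatCircle hvw s
    have := integral_rot_sphIsometry ν K a (greatCircle v w hvw 0) (greatCircle v w hvw θ)
    rw [ha, ha, add_zero, h0] at this
    exact this.symm
  have hc := continuous_greatCircle hvw
  have hcont : Continuous fun p : ℝ × OrthGroup d => K (rot p.2 (greatCircle v w hvw p.1),
      rot p.2 (greatCircle v w hvw (p.1 + θ))) :=
    hK.comp ((continuous_snd.orthRot (hc.comp continuous_fst)).prodMk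
      (continuous_snd.orthRot (hc.comp (continuous_fst.add_const θ))))
  obtain ⟨C, hC⟩ := isCompact_univ.exists_bound_of_continuousOn hK.continuousOn
  simp only [intervalIntegral.integral_of_le Real.pi_pos.le]
  rw [integral_integral_swap, ← integral_congr_ae (.of_forall hs)]
  · simp [Real.pi_pos.le]
  · have := Integrable.of_bound
      (μ := (volume.restrict (Set.Ioc 0 Real.pi)).prod ν) hcont.aestronglyMeasurable C
      (.of_forall fun p => hC _ (Set.mem_univ _))
    exact this.swap

theorem integrable_integral_greatCircle (hK : Continuous K) {v w : Sph d}
    (hvw : ⟪(v : E d), (w : E d)⟫ = 0) (θ : ℝ) :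
    Integrable (fun g => ∫ s in (0 : ℝ)..Real.pi, K (rot g (greatCircle v w hvw s),
      rot g (greatCircle v w hvw (s + θ)))) ν := by
  have hc := continuous_greatCircle hvw
  have hcont : Continuous (Function.uncurry fun (g : OrthGroup d) (s : ℝ) =>
      K (rot g (greatCircle v w hvw s), rot g (greatCircle v w hvw (s + θ)))) :=
    hK.comp ((continuous_fst.orthRot (hc.comp continuous_snd)).prodMk
      (continuous_fst.orthRot (hc.comp (continuous_snd.add_const θ))))
  have h := intervalIntegral.continuous_parametric_intervalIntegral_of_continuous' (μ := volume)
    hcont 0 Real.pi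
  exact h.integrable_of_hasCompactSupport (HasCompactSupport.of_compactSpace _)

theorem SphSmooth.integral_rot_le {h : Sph d → ℝ} (hh : SphSmooth h)
    (heven : ∀ σ, h (-σ) = h σ) (σ σ' : Sph d) :
    ∫ g, (h (rot g σ) - h (rot g σ')) ^ 2 ∂ν
      ≤ ∫ g, ⟪sphGrad h (rot g σ), (rot g σ' : E d)⟫ ^ 2 ∂ν := by
  have hnonneg : 0 ≤ ∫ g, ⟪sphGrad h (rot g σ), (rot g σ' : E d)⟫ ^ 2 ∂ν :=
    integral_nonneg fun g => sq_nonneg _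
  rcases eq_or_ne σ' σ with rfl | h1
  · simpa using hnonneg
  rcases eq_or_ne σ' (-σ) with rfl | h2
  · simpa [rot_neg, heven] using hnonneg
  obtain ⟨w, hw, θ, rfl⟩ := exists_greatCircle h1 h2
  have hh1 := hh.continuous
  have hh2 := hh.continuous_sphGrad
  have hP : Continuous fun p : Sph d × Sph d => (h p.1 - h p.2) ^ 2 := by fun_prop
  have hQ : Continuous fun p : Sph d × Sph d => ⟪sphGrad h p.1, (p.2 : E d)⟫ ^ 2 := by fun_prop
  have hle := integral_mono (integrable_integral_greatCircle ν hP hw θ)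
    (integrable_integral_greatCircle ν hQ hw θ) fun g => by
      simp only [rot, sphIsometry_greatCircle]
      exact hh.integral_greatCircle_le _ heven θ
  rw [← integral_rot_greatCircle ν hP hw θ, ← integral_rot_greatCircle ν hQ hw θ] at hle
  exact le_of_mul_le_mul_left hle Real.pi_pos

theorem continuous_rot_rot (hK : Continuous K) :
    Continuous (Function.uncurry fun (p : Sph d × Sph d) (g : OrthGroup d) =>
      K (rot g p.1, rot g p.2)) :=
  hK.comp ((continuous_snd.orthRot (continuous_fst.comp continuous_fst)).prodMk
    (continuous_snd.orthRot (continuous_snd.comp continuous_fst)))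

theorem integral_integral_rot [IsFiniteMeasure (sphMeasure d)] (hK : Continuous K) :
    ∫ p : Sph d × Sph d, (∫ g, K (rot g p.1, rot g p.2) ∂ν) ∂((sphMeasure d).prod (sphMeasure d))
      = ν.real Set.univ * ∫ σ, (∫ σ', K (σ, σ') ∂(sphMeasure d)) ∂(sphMeasure d) := by
  have hcont := continuous_rot_rot hK
  rw [integral_integral_swap_of_hasCompactSupport hcont (HasCompactSupport.of_compactSpace _)]
  have hg : ∀ g : OrthGroup d, ∫ p : Sph d × Sph d, K (rot g p.1, rot g p.2)
      ∂((sphMeasure d).prod (sphMeasure d))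
      = ∫ σ, (∫ σ', K (σ, σ') ∂(sphMeasure d)) ∂(sphMeasure d) := fun g => by
    have hc : Continuous fun p : Sph d × Sph d => K (rot g p.1, rot g p.2) :=
      hK.comp ((continuous_const.orthRot continuous_fst).prodMk
        (continuous_const.orthRot continuous_snd))
    rw [integral_prod _ (hc.integrable_of_hasCompactSupport (HasCompactSupport.of_compactSpace _))]
    simp only [rot]
    rw [integral_sphIsometry (Unitary.linearIsometryEquiv g⁻¹) fun τ =>
      ∫ σ', K (τ, sphIsometry (Unitary.linearIsometryEquiv g⁻¹) σ') ∂(sphMeasure d)]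
    exact integral_congr_ae (.of_forall fun σ => integral_sphIsometry _ fun σ' => K (σ, σ'))
  simp only [hg, integral_const, smul_eq_mul]

theorem integrable_integral_rot [IsFiniteMeasure (sphMeasure d)] (hK : Continuous K) :
    Integrable (fun p : Sph d × Sph d => ∫ g, K (rot g p.1, rot g p.2) ∂ν)
      ((sphMeasure d).prod (sphMeasure d)) := by
  have h := continuous_parametric_integral_of_continuous (μ := ν) (continuous_rot_rot hK)
    isCompact_univ
  simp only [Measure.restrict_univ] at h
  exact h.integrable_of_hasCompactSupport (HasCompactSupport.of_compactSpace _)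

end average

/-- The sharp Poincaré inequality for even functions on the sphere. -/
theorem SphSmooth.poincare_of_even {d : ℕ} (hd : 1 ≤ d) {h : Sph d → ℝ} (hh : SphSmooth h)
    (heven : ∀ σ, h (-σ) = h σ) :
    d * ∫ σ, (∫ σ', (h σ - h σ') ^ 2 ∂(sphMeasure d)) ∂(sphMeasure d)
      ≤ (sphMeasure d).real Set.univ * ∫ σ, ‖sphGrad h σ‖ ^ 2 ∂(sphMeasure d) := by
  have := isFiniteMeasure_sphMeasure hd
  set ν : Measure (OrthGroup d) := Measure.haar
  have hν : 0 < ν.real Set.univ := by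
    rw [measureReal_def]
    exact ENNReal.toReal_pos (NeZero.ne _) (measure_ne_top _ _)
  have hh1 := hh.continuous
  have hh2 := hh.continuous_sphGrad
  have hP : Continuous fun p : Sph d × Sph d => (h p.1 - h p.2) ^ 2 := by fun_prop
  have hQ : Continuous fun p : Sph d × Sph d => ⟪sphGrad h p.1, (p.2 : E d)⟫ ^ 2 := by fun_prop
  have hle := integral_mono (integrable_integral_rot ν hP) (integrable_integral_rot ν hQ)
    fun p => hh.integral_rot_le ν heven p.1 p.2
  rw [integral_integral_rot ν hP, integral_integral_rot ν hQ, mul_le_mul_iff_right₀ hν] at hle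
  simp only [integral_inner_sq_sph hd, integral_mul_const] at hle
  have hd0 : (0 : ℝ) < d := by exact_mod_cast hd
  rw [← mul_div_assoc, le_div_iff₀ hd0] at hle
  linarith

theorem abs_sub_le_max_mul_abs_log_sub {x y : ℝ} (hx : 0 < x) (hy : 0 < y) :
    |x - y| ≤ max x y * |Real.log x - Real.log y| := by
  wlog h : y ≤ x generalizing x y
  · rw [abs_sub_comm, max_comm, abs_sub_comm (Real.log x)]
    exact this hy hx (le_of_not_ge h)
  have hlog := Real.one_sub_inv_le_log_of_pos (div_pos hx hy)
  rw [Real.log_div hx.ne' hy.ne', inv_div] at hlog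
  rw [max_eq_left h, abs_of_nonneg (sub_nonneg.2 h)]
  calc x - y = x * (1 - y / x) := by field_simp
    _ ≤ x * |Real.log x - Real.log y| := by
      gcongr
      exact hlog.trans (le_abs_self _)

theorem sub_sq_le_quartic_add_log {x y z : ℝ} (hx : 0 < x) (hy : 0 < y) (hz : 0 < z) :
    (x - y) ^ 2 ≤ 5 * ((x - y) ^ 4 / (x ^ 2 + y ^ 2)) + 5 * ((x - z) ^ 4 / (x ^ 2 + z ^ 2))
      + 64 * z ^ 2 * (Real.log x - Real.log y) ^ 2 := by
  have h1 : 0 ≤ (x - y) ^ 4 / (x ^ 2 + y ^ 2) := by positivity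
  have h2 : 0 ≤ (x - z) ^ 4 / (x ^ 2 + z ^ 2) := by positivity
  have h3 : 0 ≤ 64 * z ^ 2 * (Real.log x - Real.log y) ^ 2 := by positivity
  by_cases hxy : x ^ 2 + y ^ 2 ≤ 5 * (x - y) ^ 2
  · have : (x - y) ^ 2 ≤ 5 * ((x - y) ^ 4 / (x ^ 2 + y ^ 2)) := by
      rw [← mul_div_assoc, le_div_iff₀ (by positivity)]
      nlinarith [mul_le_mul_of_nonneg_left hxy (sq_nonneg (x - y))]
    linarith
  have hyx : y < 2 * x := by
    by_contra! h
    nlinarith [mul_nonneg (sub_nonneg.2 h) (by linarith : (0 : ℝ) ≤ 2 * y - x)]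
  rcases le_total (x / 4) z with hxz | hxz
  · have h4 : |x - y| ≤ 8 * z * |Real.log x - Real.log y| :=
      (abs_sub_le_max_mul_abs_log_sub hx hy).trans (by
        gcongr
        exact max_le (by linarith) (by linarith))
    have h5 := pow_le_pow_left₀ (abs_nonneg _) h4 2
    rw [mul_pow, sq_abs, sq_abs] at h5
    nlinarith
  · have h4 : (x - y) ^ 2 ≤ x ^ 2 := by nlinarith
    have h5 : (3 / 4 * x) ^ 4 ≤ (x - z) ^ 4 := pow_le_pow_left₀ (by positivity) (by linarith) 4
    have h6 : x ^ 2 + z ^ 2 ≤ 17 / 16 * x ^ 2 := by nlinarith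
    have h7 : x ^ 2 ≤ 5 * ((x - z) ^ 4 / (x ^ 2 + z ^ 2)) := by
      rw [← mul_div_assoc, le_div_iff₀ (by positivity)]
      nlinarith [mul_le_mul_of_nonneg_left h6 (sq_nonneg x), pow_pos hx 4]
    linarith

theorem sq_sub_sq_sq_div_add {x y : ℝ} (hx : 0 < x) :
    (y ^ 2 - x ^ 2) ^ 2 / (y ^ 2 + x ^ 2)
      = 2 * (x - y) ^ 2 - (x - y) ^ 4 / (x ^ 2 + y ^ 2) := by
  have : x ^ 2 + y ^ 2 ≠ 0 := by positivity
  have : y ^ 2 + x ^ 2 ≠ 0 := by positivity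
  field_simp
  ring

theorem integral_sub_sq_le_quartic_add_log {X : Type*} [TopologicalSpace X] [CompactSpace X]
    [SecondCountableTopology X] [MeasurableSpace X] [BorelSpace X] (μ : Measure X)
    [IsFiniteMeasure μ] {x : X → ℝ} (hx : Continuous x) (hpos : ∀ s, 0 < x s) :
    μ.real Set.univ * ∫ p, (x p.1 - x p.2) ^ 2 ∂(μ.prod μ)
      ≤ 10 * μ.real Set.univ * ∫ p, (x p.1 - x p.2) ^ 4 / (x p.1 ^ 2 + x p.2 ^ 2) ∂(μ.prod μ)
        + 64 * (∫ s, x s ^ 2 ∂μ)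
          * ∫ p, (Real.log (x p.1) - Real.log (x p.2)) ^ 2 ∂(μ.prod μ) := by
  have hlog : Continuous fun s => Real.log (x s) := hx.log fun s => (hpos s).ne'
  have hx1 : Continuous fun p : X × X => x p.1 := hx.comp continuous_fst
  have hx2 : Continuous fun p : X × X => x p.2 := hx.comp continuous_snd
  have hφ : Continuous fun p : X × X => (x p.1 - x p.2) ^ 4 / (x p.1 ^ 2 + x p.2 ^ 2) := by
    refine Continuous.div (by fun_prop) (by fun_prop) fun p => ?_
    have := hpos p.1
    positivity
  have hint : ∀ {F : X → ℝ}, Continuous F → Integrable F μ := fun hF =>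
    hF.integrable_of_hasCompactSupport (HasCompactSupport.of_compactSpace _)
  have hint2 : ∀ {F : X × X → ℝ}, Continuous F → Integrable F (μ.prod μ) := fun hF =>
    hF.integrable_of_hasCompactSupport (HasCompactSupport.of_compactSpace _)
  have hl : Continuous fun p : X × X => (Real.log (x p.1) - Real.log (x p.2)) ^ 2 :=
    ((hlog.comp continuous_fst).sub (hlog.comp continuous_snd)).pow 2
  have hstep : ∀ s, ∫ p, (x p.1 - x p.2) ^ 2 ∂(μ.prod μ)
      ≤ 5 * (∫ p, (x p.1 - x p.2) ^ 4 / (x p.1 ^ 2 + x p.2 ^ 2) ∂(μ.prod μ))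
        + 5 * (μ.real Set.univ * ∫ t, (x t - x s) ^ 4 / (x t ^ 2 + x s ^ 2) ∂μ)
        + 64 * x s ^ 2 * ∫ p, (Real.log (x p.1) - Real.log (x p.2)) ^ 2 ∂(μ.prod μ) := by
    intro s
    have hc : Continuous fun p : X × X => (x p.1 - x s) ^ 4 / (x p.1 ^ 2 + x s ^ 2) :=
      hφ.comp (continuous_fst.prodMk continuous_const)
    have hi1 := (hint2 hφ).const_mul 5
    have hi2 := (hint2 hc).const_mul 5
    have hi3 := (hint2 hl).const_mul (64 * x s ^ 2)
    have hle := integral_mono (hint2 ((hx1.sub hx2).pow 2)) ((hi1.add hi2).add hi3) fun p =>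
      sub_sq_le_quartic_add_log (hpos p.1) (hpos p.2) (hpos s)
    refine hle.trans_eq ?_
    have h1 := integral_add (hi1.add hi2) hi3
    have h2 := integral_add hi1 hi2
    have h3 := integral_fun_fst (μ := μ) (ν := μ)
      fun t => (x t - x s) ^ 4 / (x t ^ 2 + x s ^ 2)
    simp only [Pi.add_apply, smul_eq_mul, integral_const_mul] at h1 h2 h3 ⊢
    rw [h1, h2, h3]
  have hi1 : Integrable (fun s => ∫ t, (x t - x s) ^ 4 / (x t ^ 2 + x s ^ 2) ∂μ) μ :=
    (hint2 hφ).integral_prod_right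
  have hi2 : Integrable (fun _ : X => 5 *
      ∫ p, (x p.1 - x p.2) ^ 4 / (x p.1 ^ 2 + x p.2 ^ 2) ∂(μ.prod μ)) μ := integrable_const _
  have hi3 := ((hi1.const_mul (μ.real Set.univ)).const_mul 5)
  have hi4 : Integrable (fun s => 64 * x s ^ 2 *
      ∫ p, (Real.log (x p.1) - Real.log (x p.2)) ^ 2 ∂(μ.prod μ)) μ :=
    ((hint (hx.pow 2)).const_mul 64).mul_const _
  have hle := integral_mono (integrable_const _) ((hi2.add hi3).add hi4) hstep
  have h1 := integral_add (hi2.add hi3) hi4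
  have h2 := integral_add hi2 hi3
  have h3 := integral_prod_symm _ (hint2 hφ)
  simp only [Pi.add_apply, smul_eq_mul, integral_const_mul, integral_mul_const, integral_const]
    at h1 h2 h3 hle
  rw [h1, h2, ← h3] at hle
  linarith

theorem mul_le_of_poincare_of_quartic_le {d β M F B G L P Φ : ℝ} (hd : 0 < d) (hβ : 0 ≤ β)
    (hM : 0 ≤ M) (hF : 0 ≤ F) (hB : 0 ≤ B) (hP : 0 ≤ P) (hΦ : 0 ≤ Φ) (hPG : d * P ≤ M * G)
    (hLB : d * L ≤ M * B) (h : M * P ≤ 10 * M * Φ + 64 * F * (1 / 4 * L)) :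
    d * (65 / 64) * (β * (2 * P - Φ)) ≤ β / 2 * (F * B + 4 * (M * G)) := by
  suffices hs : d * (65 / 32) * (2 * P - Φ) ≤ F * B + 4 * (M * G) by
    nlinarith [mul_le_mul_of_nonneg_left hs hβ]
  have hFB := mul_nonneg hF hB
  have hdΦ := mul_nonneg hd.le hΦ
  have hdP := mul_nonneg hd.le hP
  rcases hM.eq_or_lt with rfl | hM
  · linarith
  have h1 : M * (d * P) ≤ M * (10 * (d * Φ) + 16 * (F * B)) := by
    nlinarith [mul_le_mul_of_nonneg_left h hd.le, mul_le_mul_of_nonneg_left hLB hF]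
  have h2 := le_of_mul_le_mul_left h1 hM
  linarith

section constantKernel

variable {d : ℕ} [IsFiniteMeasure (sphMeasure d)]

theorem sphB_const (β : ℝ) {F : Sph d → ℝ} (hF : Continuous F) (σ : Sph d) :
    sphB (fun _ => β) F σ
      = β * ((∫ τ, F τ ∂(sphMeasure d)) - (sphMeasure d).real Set.univ * F σ) := by
  rw [sphB, integral_mul_const, integral_sub hF.integrable_sph (integrable_const _),
    integral_const, smul_eq_mul, mul_comm]

theorem Gamma2BD_const (β : ℝ) {g : Sph d → ℝ} (hg : SphSmooth g) (σ : Sph d) :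
    Gamma2BD (fun _ => β) g σ = β / 2 * ((∫ τ, ‖sphGrad g τ‖ ^ 2 ∂(sphMeasure d))
      + (sphMeasure d).real Set.univ * ‖sphGrad g σ‖ ^ 2) := by
  have h : HasDerivAt (fun t => β * ((∫ τ, g τ ∂(sphMeasure d))
      - (sphMeasure d).real Set.univ * t)) (β * -((sphMeasure d).real Set.univ * 1)) (g σ) :=
    (((hasDerivAt_id (g σ)).const_mul _).const_sub _).const_mul β
  rw [Gamma2BD, sphB_const β (F := fun τ => ‖sphGrad g τ‖ ^ 2) (hg.continuous_sphGrad.norm.pow 2)]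
  simp only [sphB_const β hg.continuous]
  rw [hg.sphGrad_comp σ h, real_inner_smul_right, real_inner_self_eq_norm_sq]
  ring

end constantKernel

theorem SphSmooth.mul_integral_le_integral_Gamma2BD_const {d : ℕ} (hd : 1 ≤ d) {β : ℝ}
    (hβ : 0 < β) {f : Sph d → ℝ} (hf : SphSmooth f) (hpos : ∀ σ, 0 < f σ)
    (heven : ∀ σ, f (-σ) = f σ) :
    d * (65 / 64) * ∫ σ, (∫ σ', (f σ' - f σ) ^ 2 / (f σ' + f σ) * β ∂(sphMeasure d))
        ∂(sphMeasure d)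
      ≤ ∫ σ, Gamma2BD (fun _ => β) (fun τ => Real.log (f τ)) σ * f σ ∂(sphMeasure d) := by
  have := isFiniteMeasure_sphMeasure hd
  set μ := sphMeasure d
  have hg : SphSmooth fun τ => Real.log (f τ) :=
    hf.comp fun σ => Real.contDiffAt_log.2 (hpos σ).ne'
  have hx : SphSmooth fun τ => √(f τ) := hf.comp fun σ => Real.contDiffAt_sqrt (hpos σ).ne'
  have hfc := hf.continuous
  have hxc := hx.continuous
  have hgc := hg.continuous
  have hxpos : ∀ σ, 0 < √(f σ) := fun σ => Real.sqrt_pos.2 (hpos σ)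
  have hsq : ∀ σ, √(f σ) ^ 2 = f σ := fun σ => Real.sq_sqrt (hpos σ).le
  have hgrad : ∀ σ, ‖sphGrad (fun τ => √(f τ)) σ‖ ^ 2
      = 1 / 4 * (‖sphGrad (fun τ => Real.log (f τ)) σ‖ ^ 2 * f σ) := fun σ => by
    rw [hf.sphGrad_comp σ (Real.hasDerivAt_sqrt (hpos σ).ne'),
      hf.sphGrad_comp σ (Real.hasDerivAt_log (hpos σ).ne'), norm_smul, norm_smul, mul_pow, mul_pow,
      Real.norm_eq_abs, Real.norm_eq_abs, sq_abs, sq_abs, div_pow, mul_pow, hsq]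
    have := (hpos σ).ne'
    field_simp
    ring
  have hint2 : ∀ {F : Sph d × Sph d → ℝ}, Continuous F → Integrable F (μ.prod μ) := fun hF =>
    hF.integrable_of_hasCompactSupport (HasCompactSupport.of_compactSpace _)
  have hPc : Continuous fun p : Sph d × Sph d => (√(f p.1) - √(f p.2)) ^ 2 := by fun_prop
  have hLc : Continuous fun p : Sph d × Sph d =>
      (Real.log (f p.1) - Real.log (f p.2)) ^ 2 :=
    ((hgc.comp continuous_fst).sub (hgc.comp continuous_snd)).pow 2
  have hφc : Continuous fun p : Sph d × Sph d =>
      (√(f p.1) - √(f p.2)) ^ 4 / (√(f p.1) ^ 2 + √(f p.2) ^ 2) := by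
    refine Continuous.div (by fun_prop) (by fun_prop) fun p => ?_
    have := hxpos p.1
    positivity
  have hD : ∫ σ, (∫ σ', (f σ' - f σ) ^ 2 / (f σ' + f σ) * β ∂μ) ∂μ
      = β * (2 * (∫ p, (√(f p.1) - √(f p.2)) ^ 2 ∂(μ.prod μ))
        - ∫ p, (√(f p.1) - √(f p.2)) ^ 4 / (√(f p.1) ^ 2 + √(f p.2) ^ 2) ∂(μ.prod μ)) := by
    have hDp : ∀ σ σ', (f σ' - f σ) ^ 2 / (f σ' + f σ) = 2 * (√(f σ) - √(f σ')) ^ 2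
        - (√(f σ) - √(f σ')) ^ 4 / (√(f σ) ^ 2 + √(f σ') ^ 2) := fun σ σ' => by
      have := sq_sub_sq_sq_div_add (y := √(f σ')) (hxpos σ)
      rwa [hsq, hsq] at this ⊢
    simp only [integral_mul_const, hDp]
    rw [← integral_const_mul, ← integral_sub ((hint2 hPc).const_mul 2) (hint2 hφc),
      mul_comm]
    exact congrArg _ (integral_prod _ (((hint2 hPc).const_mul 2).sub (hint2 hφc))).symm
  have hΓ : ∫ σ, Gamma2BD (fun _ => β) (fun τ => Real.log (f τ)) σ * f σ ∂μ
      = β / 2 * ((∫ σ, f σ ∂μ) * (∫ σ, ‖sphGrad (fun τ => Real.log (f τ)) σ‖ ^ 2 ∂μ)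
        + 4 * (μ.real Set.univ * ∫ σ, ‖sphGrad (fun τ => √(f τ)) σ‖ ^ 2 ∂μ)) := by
    have hc : Continuous fun σ => ‖sphGrad (fun τ => Real.log (f τ)) σ‖ ^ 2 * f σ :=
      (hg.continuous_sphGrad.norm.pow 2).mul hfc
    simp only [Gamma2BD_const β hg, hgrad, mul_assoc, add_mul, integral_const_mul]
    rw [integral_add (hfc.integrable_sph.const_mul _) (hc.integrable_sph.const_mul _)]
    simp only [integral_const_mul]
    ring
  have hPx := hx.poincare_of_even hd fun σ => by rw [heven]
  have hPg := hg.poincare_of_even hd fun σ => by rw [heven]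
  rw [← integral_prod (fun p : Sph d × Sph d => (√(f p.1) - √(f p.2)) ^ 2) (hint2 hPc)] at hPx
  rw [← integral_prod (fun p : Sph d × Sph d => (Real.log (f p.1) - Real.log (f p.2)) ^ 2)
    (hint2 hLc)] at hPg
  have hlog : ∀ σ, Real.log √(f σ) = Real.log (f σ) / 2 := fun σ => Real.log_sqrt (hpos σ).le
  have h3 := integral_sub_sq_le_quartic_add_log μ hxc hxpos
  have hL : ∫ p : Sph d × Sph d, (Real.log √(f p.1) - Real.log √(f p.2)) ^ 2 ∂(μ.prod μ)
      = 1 / 4 * ∫ p : Sph d × Sph d, (Real.log (f p.1) - Real.log (f p.2)) ^ 2 ∂(μ.prod μ) := by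
    rw [← integral_const_mul]
    refine integral_congr_ae (.of_forall fun p => ?_)
    simp only [hlog]
    ring
  have hF0 : 0 ≤ ∫ σ, f σ ∂μ := integral_nonneg fun σ => (hpos σ).le
  have hB0 : 0 ≤ ∫ σ, ‖sphGrad (fun τ => Real.log (f τ)) σ‖ ^ 2 ∂μ :=
    integral_nonneg fun σ => sq_nonneg _
  have hΦ0 : 0 ≤ ∫ p : Sph d × Sph d,
      (√(f p.1) - √(f p.2)) ^ 4 / (√(f p.1) ^ 2 + √(f p.2) ^ 2) ∂(μ.prod μ) :=
    integral_nonneg fun p => by positivity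
  simp only [hL, hsq] at h3
  simp only [hsq] at hD hΦ0
  rw [hD, hΓ]
  have hP0 : 0 ≤ ∫ p : Sph d × Sph d, (√(f p.1) - √(f p.2)) ^ 2 ∂(μ.prod μ) :=
    integral_nonneg fun p => sq_nonneg _
  exact mul_le_of_poincare_of_quartic_le (by exact_mod_cast hd) hβ.le measureReal_nonneg hF0 hB0
    hP0 hΦ0 hPx hPg h3

/-- For a constant kernel `b ≡ β > 0`, the log-Sobolev inequality `LS(Λ, b)`
holds for some `Λ > d`. -/
theorem logSobolev_constant_kernel
    (d : ℕ) (hd : 2 ≤ d) (β : ℝ) (hβ : 0 < β) :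
    ∃ Λ : ℝ, (d : ℝ) < Λ ∧ LS d (fun _ => β) Λ := by
  have hd0 : (0 : ℝ) < d := by positivity
  exact ⟨d * (65 / 64), by linarith, fun f hf hpos heven =>
    hf.mul_integral_le_integral_Gamma2BD_const (by omega) hβ hpos heven⟩
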